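/- Let R be a symmetric (2,2)-double form satisfying the first Bianchi identity on an n-dimensional real inner product space (V,g) with n ≥ 4. Then Avez's formula holds: h₄(R) = |R|² − |cR|² + (1/4)|c²R|². -/

import Mathlib

noncomputable section

open Finset

/-- Double forms over an `n`-dimensional real inner product space, described by their
coefficients in a fixed orthonormal basis: a `(p,q)`-double form corresponds to a function
supported on pairs of subsets of cardinalities `p` and `q`. -/
abbrev DForm (n : ℕ) := Finset (Fin n) → Finset (Fin n) → ℝ

namespace DForm

variable {n : ℕ}

/-- Sign of the shuffle placing the elements of `A` (in increasing order) before
those of `B` (in increasing order). -/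
def shuffleSign (A B : Finset (Fin n)) : ℝ :=
  (-1 : ℝ) ^ (∑ x ∈ B, (A.filter fun a => x < a).card)

/-- The exterior product of double forms. -/
def wedge (ω₁ ω₂ : DForm n) : DForm n := fun I J =>
  ∑ A ∈ I.powerset, ∑ B ∈ J.powerset,
    shuffleSign A (I \ A) * shuffleSign B (J \ B) * ω₁ A B * ω₂ (I \ A) (J \ B)

/-- Exterior powers `ω^k` of a double form. -/
def dpow (ω : DForm n) : ℕ → DForm n
  | 0 => fun I J => if I = ∅ ∧ J = ∅ then 1 else 0
  | k + 1 => wedge ω (dpow ω k)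

/-- The double Hodge star operator. -/
def hstar (ω : DForm n) : DForm n := fun I J =>
  shuffleSign Iᶜ I * shuffleSign Jᶜ J * ω Iᶜ Jᶜ

/-- The contraction `c` of double forms. -/
def contr (ω : DForm n) : DForm n := fun I J =>
  ∑ j : Fin n,
    if j ∈ I ∨ j ∈ J then 0
    else shuffleSign {j} I * shuffleSign {j} J * ω (insert j I) (insert j J)

/-- Iterated contraction `c^k`. -/
def citer (ω : DForm n) : ℕ → DForm n
  | 0 => ω
  | k + 1 => contr (citer ω k)

/-- The inner product of double forms. -/
def dinner (ω₁ ω₂ : DForm n) : ℝ :=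
  ∑ I : Finset (Fin n), ∑ J : Finset (Fin n), ω₁ I J * ω₂ I J

/-- The transpose `ω^t` of a double form. -/
def transp (ω : DForm n) : DForm n := fun I J => ω J I

/-- The composition (Greub) product `ω₁ ∘ ω₂` of double forms. -/
def comp (ω₁ ω₂ : DForm n) : DForm n := fun I J =>
  ∑ K : Finset (Fin n), ω₂ I K * ω₁ K J

/-- The scalar value of a `(0,0)`-double form. -/
def toScalar (ω : DForm n) : ℝ := ω ∅ ∅

/-- The metric, as a `(1,1)`-double form. -/
def gMetric (n : ℕ) : DForm n := fun I J => if I = J ∧ I.card = 1 then 1 else 0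

/-- Iterated composition power `ω^{∘r}` of a `(1,1)`-double form, with `ω^{∘0} = g`. -/
def cpow (ω : DForm n) : ℕ → DForm n
  | 0 => gMetric n
  | r + 1 => comp ω (cpow ω r)

/-- The `(1,1)`-double form associated to a bilinear form, given by its matrix in the
orthonormal basis. -/
def ofMatrix (h : Matrix (Fin n) (Fin n) ℝ) : DForm n := fun I J =>
  ∑ i : Fin n, ∑ j : Fin n, if I = {i} ∧ J = {j} then h i j else 0

/-- `ω` is a `(p,q)`-double form. -/
def IsOfDeg (ω : DForm n) (p q : ℕ) : Prop :=
  ∀ I J : Finset (Fin n), ω I J ≠ 0 → I.card = p ∧ J.card = q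

/-- `ω` is a symmetric double form. -/
def IsSym (ω : DForm n) : Prop := ∀ I J, ω I J = ω J I

/-- The sign relating `e_{v 0} ∧ ⋯ ∧ e_{v (p-1)}` to the corresponding increasing
basis `p`-vector (and `0` if the indices are not pairwise distinct). -/
def tupleSign {p : ℕ} (v : Fin p → Fin n) : ℝ :=
  if Function.Injective v then (((Equiv.Perm.sign (Tuple.sort v)) : ℤ) : ℝ) else 0

/-- Evaluation of a double form on wedges of basis vectors indexed by arbitrary tuples. -/
def evalT (ω : DForm n) {p q : ℕ} (v : Fin p → Fin n) (w : Fin q → Fin n) : ℝ :=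
  tupleSign v * tupleSign w * ω (Finset.image v Finset.univ) (Finset.image w Finset.univ)

/-- The first Bianchi identity for a `(2,2)`-double form:
`R(x∧y,z∧t) + R(y∧z,x∧t) + R(z∧x,y∧t) = 0`. -/
def Bianchi2 (R : DForm n) : Prop :=
  ∀ x y z t : Fin n,
    evalT R ![x, y] ![z, t] + evalT R ![y, z] ![x, t] + evalT R ![z, x] ![y, t] = 0

/-- The first Bianchi identity for a `(p,p)`-double form. -/
def FirstBianchi (ω : DForm n) (p : ℕ) : Prop :=
  ∀ (x : Fin (p + 1) → Fin n) (y : Fin (p - 1) → Fin n),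
    ∑ j : Fin (p + 1),
      (-1 : ℝ) ^ (j : ℕ) * evalT ω (x ∘ Fin.succAbove j) (Fin.cons (x j) y) = 0

/-- The characteristic coefficient `s_k(h)` of a bilinear form `h`, defined through the
characteristic polynomial: `det(h - λ g) = ∑ (-1)^(n-i) s_i(h) λ^(n-i)`. -/
def sInv (h : Matrix (Fin n) (Fin n) ℝ) (k : ℕ) : ℝ :=
  (-1 : ℝ) ^ k * (Matrix.charpoly h).coeff (n - k)

/-- The `k`-th cofactor (Newton) transformation `t_k(h) = (1/(k!(n-1-k)!)) *(g^{n-1-k} h^k)`. -/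
def tInv (h : Matrix (Fin n) (Fin n) ℝ) (k : ℕ) : DForm n :=
  ((k.factorial * (n - 1 - k).factorial : ℕ) : ℝ)⁻¹ •
    hstar (wedge (dpow (gMetric n) (n - 1 - k)) (dpow (ofMatrix h) k))

/-- The `(r,q)`-cofactor `s_{(r,q)}(h) = (1/(q!(n-q-r)!)) *(g^{n-q-r} h^q)`. -/
def sCof (h : Matrix (Fin n) (Fin n) ℝ) (r q : ℕ) : DForm n :=
  ((q.factorial * (n - q - r).factorial : ℕ) : ℝ)⁻¹ •
    hstar (wedge (dpow (gMetric n) (n - q - r)) (dpow (ofMatrix h) q))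

end DForm

/-
For a double form `ω`, the scalar `cᵏω / k!` is the trace of the `(k,k)`-component of `ω` as an
endomorphism of `Λᵏ V`. Avez's formula therefore computes the trace of `R²` on `Λ⁴ V`, and it is the
diagonal case of a bilinear formula for `tr₄ (ω · θ)`. A principal coefficient of `ω · θ` on
`e_i ∧ e_j ∧ e_k ∧ e_l` splits the row indices as `ij|kl` and the column indices according to the
six `(2,2)`-shuffles. The column pair of `ω` meets `ij` in two, one or no indices: the first case
gives the product of the full contractions, the four shuffles of the second each give minus the
pairing of the simple contractions, and the last gives the pairing of `ω` with the transpose of `θ`.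
-/

namespace DForm

section FinsetSums

variable {α M : Type*} [AddCommMonoid M]

lemma sum_powersetCard_one (s : Finset α) (φ : Finset α → M) :
    ∑ K ∈ powersetCard 1 s, φ K = ∑ a ∈ s, φ {a} := by
  rw [powersetCard_one, sum_map]
  rfl

lemma sum_powersetCard_of_ne_zero {k : ℕ} {φ : Finset α → M} (s : Finset α)
    (hφ : ∀ K, φ K ≠ 0 → K.card = k) :
    ∑ K ∈ powersetCard k s, φ K = ∑ K ∈ s.powerset, φ K := by
  rw [powersetCard_eq_filter, sum_filter_of_ne fun K _ => hφ K]

variable [DecidableEq α]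

lemma sum_powersetCard_insert {a : α} {s : Finset α} (ha : a ∉ s) (k : ℕ) (φ : Finset α → M) :
    ∑ K ∈ powersetCard (k + 1) (insert a s), φ K =
      ∑ K ∈ powersetCard (k + 1) s, φ K + ∑ K ∈ powersetCard k s, φ (insert a K) := by
  have notMem {m : ℕ} : ∀ K ∈ powersetCard m s, a ∉ K := fun K hK =>
    notMem_mono (mem_powersetCard.1 hK).1 ha
  rw [powersetCard_succ_insert ha, sum_union, sum_image]
  · intro K hK L hL h
    rw [← erase_insert (notMem K hK), h, erase_insert (notMem L hL)]
  · simp only [disjoint_left, mem_image]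
    rintro _ hK ⟨L, -, rfl⟩
    exact notMem _ hK (mem_insert_self a L)

lemma sum_powersetCard_sum_insert (s : Finset α) (k : ℕ) (φ : Finset α → M) :
    ∑ I ∈ powersetCard k s, ∑ j ∈ s \ I, φ (insert j I) =
      (k + 1) • ∑ K ∈ powersetCard (k + 1) s, φ K := by
  have card_nsmul : ∀ K ∈ powersetCard (k + 1) s, ∑ _j ∈ K, φ K = (k + 1) • φ K := fun K hK => by
    rw [sum_const, (mem_powersetCard.1 hK).2]
  rw [smul_sum, ← sum_congr rfl card_nsmul, sum_sigma', sum_sigma']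
  refine sum_bij' (fun x _ => ⟨insert x.2 x.1, x.2⟩) (fun x _ => ⟨x.1.erase x.2, x.2⟩)
    ?_ ?_ ?_ ?_ (fun _ _ => rfl)
  all_goals
    rintro ⟨I, j⟩ h
    simp only [mem_sigma, mem_powersetCard, mem_sdiff, Sigma.mk.injEq] at h ⊢
    grind

lemma sum_powersetCard_add (s : Finset α) (p q : ℕ) (F : Finset α → Finset α → M) :
    ∑ I ∈ powersetCard (p + q) s, ∑ A ∈ powersetCard p I, F A (I \ A) =
      ∑ A ∈ powersetCard p s, ∑ C ∈ powersetCard q s with Disjoint A C, F A C := by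
  rw [sum_sigma', sum_sigma']
  refine sum_bij' (fun x _ => ⟨x.2, x.1 \ x.2⟩) (fun x _ => ⟨x.1 ∪ x.2, x.1⟩)
    ?_ ?_ ?_ ?_ (fun _ _ => rfl)
  all_goals
    rintro ⟨I, A⟩ h
    simp only [mem_sigma, mem_powersetCard, mem_filter, Sigma.mk.injEq] at h ⊢
  · exact ⟨⟨h.2.1.trans h.1.1, h.2.2⟩, ⟨sdiff_subset.trans h.1.1, by grind⟩, disjoint_sdiff⟩
  · exact ⟨⟨union_subset h.1.1 h.2.1.1, by rw [card_union_of_disjoint h.2.2, h.1.2, h.2.1.2]⟩,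
      subset_union_left, h.1.2⟩
  · exact ⟨union_sdiff_of_subset h.2.1, HEq.rfl⟩
  · exact ⟨trivial, heq_of_eq (union_sdiff_cancel_left h.2.2)⟩

lemma two_nsmul_sum_powersetCard_two [Fintype α] {φ : Finset α → M} {f : α → α → M}
    (hdiag : ∀ i, f i i = 0) (hf : ∀ i j, i ≠ j → f i j = φ {i, j}) :
    2 • ∑ A ∈ powersetCard 2 univ, φ A = ∑ i, ∑ j, f i j := by
  rw [← sum_powersetCard_sum_insert, sum_powersetCard_one]
  refine sum_congr rfl fun i _ => ?_
  rw [← compl_eq_univ_sdiff, ← sum_compl_add_sum {i}, sum_singleton, hdiag, add_zero]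
  refine sum_congr rfl fun j hj => ?_
  rw [hf i j (by simpa [eq_comm] using hj), pair_comm]

lemma four_nsmul_sum_powersetCard_two [Fintype α] {φ : Finset α → Finset α → M}
    {f : α → α → α → α → M} (hleft : ∀ i k l, f i i k l = 0) (hright : ∀ i j k, f i j k k = 0)
    (hf : ∀ i j k l, i ≠ j → k ≠ l → f i j k l = φ {i, j} {k, l}) :
    4 • ∑ A ∈ powersetCard 2 univ, ∑ C ∈ powersetCard 2 univ, φ A C =
      ∑ i, ∑ j, ∑ k, ∑ l, f i j k l := by
  rw [mul_nsmul _ 2 2, smul_sum]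
  refine two_nsmul_sum_powersetCard_two (fun i => ?_) fun i j hij => ?_
  · simp only [hleft, sum_const_zero]
  · exact (two_nsmul_sum_powersetCard_two (hright i j) fun k l => hf i j k l hij).symm

lemma sum_powersetCard_two_quadruple {i j k l : α} (h : [i, j, k, l].Nodup)
    (F : Finset α → Finset α → M) :
    ∑ B ∈ powersetCard 2 {i, j, k, l}, F B ({i, j, k, l} \ B) =
      F {i, j} {k, l} + F {i, k} {j, l} + F {i, l} {j, k} +
        F {j, k} {i, l} + F {j, l} {i, k} + F {k, l} {i, j} := by
  rw [sum_powersetCard_insert (by grind), sum_powersetCard_insert (by grind),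
    sum_powersetCard_insert (by grind), powersetCard_eq_empty.2 (by simp), sum_empty, zero_add]
  simp only [sum_powersetCard_one]
  rw [sum_insert (by grind), sum_insert (by grind), sum_insert (by grind),
    sum_singleton, sum_singleton, sum_singleton]
  have hij : ({i, j, k, l} : Finset α) \ {i, j} = {k, l} := by grind
  have hik : ({i, j, k, l} : Finset α) \ {i, k} = {j, l} := by grind
  have hil : ({i, j, k, l} : Finset α) \ {i, l} = {j, k} := by grind
  have hjk : ({i, j, k, l} : Finset α) \ {j, k} = {i, l} := by grind
  have hjl : ({i, j, k, l} : Finset α) \ {j, l} = {i, k} := by grind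
  have hkl : ({i, j, k, l} : Finset α) \ {k, l} = {i, j} := by grind
  rw [hij, hik, hil, hjk, hjl, hkl]
  abel

end FinsetSums

variable {n : ℕ}

/-- The trace of the `(k,k)`-component of `ω`, seen as an endomorphism of `Λᵏ V`. -/
def trace (k : ℕ) (ω : DForm n) : ℝ := ∑ I ∈ powersetCard k univ, ω I I

lemma shuffleSign_mul_self (A B : Finset (Fin n)) : shuffleSign A B * shuffleSign A B = 1 := by
  rw [shuffleSign, ← mul_pow, neg_one_mul, neg_neg, one_pow]

lemma contr_self (ω : DForm n) (I : Finset (Fin n)) :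
    contr ω I I = ∑ j ∈ univ \ I, ω (insert j I) (insert j I) := by
  simp only [contr, or_self, shuffleSign_mul_self, one_mul, sum_ite, sum_const_zero, zero_add,
    filter_notMem_eq_sdiff]

lemma trace_contr (k : ℕ) (ω : DForm n) : trace k (contr ω) = (k + 1) * trace (k + 1) ω := by
  simp only [trace, contr_self, nsmul_eq_mul, Nat.cast_add, Nat.cast_one,
    sum_powersetCard_sum_insert univ k fun K => ω K K]

lemma factorial_mul_trace_citer (ω : DForm n) (k m : ℕ) :
    m.factorial * trace m (citer ω k) = (m + k).factorial * trace (m + k) ω := by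
  induction k generalizing m with
  | zero => rfl
  | succ k ih =>
    rw [citer, trace_contr, ← mul_assoc, ← Nat.cast_succ, ← Nat.cast_mul, mul_comm m.factorial,
      ← Nat.factorial_succ, ih, Nat.add_right_comm, Nat.add_assoc]

lemma toScalar_citer (ω : DForm n) (k : ℕ) :
    toScalar (citer ω k) = k.factorial * trace k ω := by
  simpa [trace, toScalar] using factorial_mul_trace_citer ω k 0

lemma trace_wedge {ω : DForm n} {p : ℕ} (hω : IsOfDeg ω p p) (θ : DForm n) (q : ℕ) :
    trace (p + q) (wedge ω θ) =
      ∑ A ∈ powersetCard p univ, ∑ C ∈ powersetCard q univ with Disjoint A C,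
        shuffleSign A C * ∑ B ∈ powersetCard p (A ∪ C),
          shuffleSign B ((A ∪ C) \ B) * (ω A B * θ C ((A ∪ C) \ B)) := by
  rw [← sum_powersetCard_add]
  refine sum_congr rfl fun I _ => ?_
  rw [wedge, ← sum_powersetCard_of_ne_zero I fun A hA => ?_]
  · refine sum_congr rfl fun A hA => ?_
    rw [union_sdiff_of_subset (mem_powersetCard.1 hA).1,
      sum_powersetCard_of_ne_zero I fun B hB => (hω A B ?_).2, mul_sum]
    · exact sum_congr rfl fun B _ => by ring
    · exact left_ne_zero_of_mul (right_ne_zero_of_mul hB)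
  · obtain ⟨B, -, hB⟩ := exists_ne_zero_of_sum_ne_zero hA
    exact (hω A B (right_ne_zero_of_mul (left_ne_zero_of_mul hB))).1

lemma dinner_eq_sum_powersetCard {ω : DForm n} {p q : ℕ} (hω : IsOfDeg ω p q) (θ : DForm n) :
    dinner ω θ = ∑ I ∈ powersetCard p univ, ∑ J ∈ powersetCard q univ, ω I J * θ I J := by
  rw [dinner, ← powerset_univ, ← sum_powersetCard_of_ne_zero univ fun I hI => ?_]
  · refine sum_congr rfl fun I _ => ?_
    rw [sum_powersetCard_of_ne_zero univ fun J hJ => (hω I J (left_ne_zero_of_mul hJ)).2]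
  · obtain ⟨J, -, hJ⟩ := exists_ne_zero_of_sum_ne_zero hI
    exact (hω I J (left_ne_zero_of_mul hJ)).1

lemma IsOfDeg.contr {ω : DForm n} {p q : ℕ} (hω : IsOfDeg ω (p + 1) (q + 1)) :
    IsOfDeg (contr ω) p q := by
  intro I J hIJ
  obtain ⟨j, -, hj⟩ := exists_ne_zero_of_sum_ne_zero hIJ
  rw [ne_eq, ite_eq_left_iff, not_forall] at hj
  obtain ⟨hmem, hne⟩ := hj
  rw [not_or] at hmem
  obtain ⟨hI, hJ⟩ := hω _ _ (right_ne_zero_of_mul hne)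
  rw [card_insert_of_notMem hmem.1, add_left_inj] at hI
  rw [card_insert_of_notMem hmem.2, add_left_inj] at hJ
  exact ⟨hI, hJ⟩

lemma IsSym.transp_eq {ω : DForm n} (hω : IsSym ω) : transp ω = ω :=
  funext₂ fun I J => hω J I

lemma IsSym.contr {ω : DForm n} (hω : IsSym ω) : IsSym (contr ω) := fun I J =>
  sum_congr rfl fun j _ => by
    simp only [or_comm, hω (insert j I), mul_comm (shuffleSign {j} I)]

/-- The sign relating `e_i ∧ e_j` to the basis bivector of `{i, j}`, zero if `i = j`. -/
def pairSign (i j : Fin n) : ℝ := if i = j then 0 else shuffleSign {i} {j}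

/-- The alternating `2`-tensor whose value at `(e_i, e_j)`, `i < j`, is `φ {i, j}`. -/
def twoForm (φ : Finset (Fin n) → ℝ) (i j : Fin n) : ℝ := pairSign i j * φ {i, j}

/-- The components `ω (e_i ∧ e_j, e_k ∧ e_l)` of the `(2,2)`-part of `ω`. -/
def tensor (ω : DForm n) (i j k l : Fin n) : ℝ := pairSign i j * twoForm (ω {i, j}) k l

/-- The exterior product of two alternating `2`-tensors, as a sum over `(2,2)`-shuffles. -/
def wedgeTwo (u v : Fin n → Fin n → ℝ) (i j k l : Fin n) : ℝ :=
  u i j * v k l - u i k * v j l + u i l * v j k + u j k * v i l - u j l * v i k + u k l * v i j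

lemma pairSign_self (i : Fin n) : pairSign i i = 0 := if_pos rfl

lemma pairSign_of_ne {i j : Fin n} (h : i ≠ j) : pairSign i j = shuffleSign {i} {j} := if_neg h

lemma pairSign_mul_self {i j : Fin n} (h : i ≠ j) : pairSign i j * pairSign i j = 1 := by
  rw [pairSign_of_ne h, shuffleSign_mul_self]

lemma pairSign_swap (i j : Fin n) : pairSign j i = -pairSign i j := by
  rcases lt_trichotomy i j with h | rfl | h
  · simp [pairSign, shuffleSign, filter_singleton, h.ne, h.ne', h, h.not_gt]
  · simp [pairSign]
  · simp [pairSign, shuffleSign, filter_singleton, h.ne, h.ne', h, h.not_gt]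

lemma shuffleSign_union_left {A B : Finset (Fin n)} (h : Disjoint A B) (C : Finset (Fin n)) :
    shuffleSign (A ∪ B) C = shuffleSign A C * shuffleSign B C := by
  simp only [shuffleSign, filter_union, card_union_of_disjoint (disjoint_filter_filter h),
    sum_add_distrib, pow_add]

lemma shuffleSign_union_right (A : Finset (Fin n)) {B C : Finset (Fin n)} (h : Disjoint B C) :
    shuffleSign A (B ∪ C) = shuffleSign A B * shuffleSign A C := by
  rw [shuffleSign, sum_union h, pow_add, shuffleSign, shuffleSign]

lemma shuffleSign_pair_pair {i j k l : Fin n} (h : [i, j, k, l].Nodup) :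
    shuffleSign {i, j} {k, l} =
      pairSign i k * pairSign i l * pairSign j k * pairSign j l := by
  simp only [List.nodup_cons, List.mem_cons, List.not_mem_nil, or_false, not_or] at h
  obtain ⟨⟨hij, hik, hil⟩, ⟨hjk, hjl⟩, hkl, -⟩ := h
  rw [pairSign_of_ne hik, pairSign_of_ne hil, pairSign_of_ne hjk, pairSign_of_ne hjl,
    insert_eq i, insert_eq k, shuffleSign_union_left (by simpa using hij),
    shuffleSign_union_right _ (by simpa using hkl), shuffleSign_union_right _ (by simpa using hkl)]
  ring

/-- The sign relating `e_i ∧ e_j ∧ e_k ∧ e_l` to the basis vector of `{i, j, k, l}`. -/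
def quadSign (i j k l : Fin n) : ℝ :=
  pairSign i j * pairSign i k * pairSign i l * pairSign j k * pairSign j l * pairSign k l

lemma shuffleSign_mul_twoForm {i j k l : Fin n} (h : [i, j, k, l].Nodup)
    (φ ψ : Finset (Fin n) → ℝ) :
    shuffleSign {i, j} {k, l} * (φ {i, j} * ψ {k, l}) =
      quadSign i j k l * (twoForm φ i j * twoForm ψ k l) := by
  have hij : pairSign i j * pairSign i j = 1 := pairSign_mul_self (by grind)
  have hkl : pairSign k l * pairSign k l = 1 := pairSign_mul_self (by grind)
  calc shuffleSign {i, j} {k, l} * (φ {i, j} * ψ {k, l})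
    _ = (pairSign i j * pairSign i j) * (pairSign k l * pairSign k l) *
        (pairSign i k * pairSign i l * pairSign j k * pairSign j l) * (φ {i, j} * ψ {k, l}) := by
      rw [shuffleSign_pair_pair h, hij, hkl, one_mul, one_mul]
    _ = quadSign i j k l * (twoForm φ i j * twoForm ψ k l) := by
      rw [quadSign, twoForm, twoForm]
      ring

lemma sum_shuffleSign_mul {i j k l : Fin n} (h : [i, j, k, l].Nodup) (φ ψ : Finset (Fin n) → ℝ) :
    ∑ B ∈ powersetCard 2 {i, j, k, l},
        shuffleSign B ({i, j, k, l} \ B) * (φ B * ψ ({i, j, k, l} \ B)) =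
      quadSign i j k l * wedgeTwo (twoForm φ) (twoForm ψ) i j k l := by
  rw [sum_powersetCard_two_quadruple h fun B C => shuffleSign B C * (φ B * ψ C)]
  rw [shuffleSign_mul_twoForm (by grind), shuffleSign_mul_twoForm (by grind),
    shuffleSign_mul_twoForm (by grind), shuffleSign_mul_twoForm (by grind),
    shuffleSign_mul_twoForm (by grind), shuffleSign_mul_twoForm (by grind)]
  simp only [quadSign, wedgeTwo, pairSign_swap i j, pairSign_swap i k, pairSign_swap i l,
    pairSign_swap j k, pairSign_swap j l, pairSign_swap k l]
  ring

lemma twoForm_swap (φ : Finset (Fin n) → ℝ) (i j : Fin n) : twoForm φ j i = -twoForm φ i j := by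
  rw [twoForm, twoForm, pairSign_swap, pair_comm, neg_mul]

lemma tensor_swap_left (ω : DForm n) (i j k l : Fin n) : tensor ω j i k l = -tensor ω i j k l := by
  rw [tensor, tensor, pairSign_swap, pair_comm, neg_mul]

lemma tensor_swap_right (ω : DForm n) (i j k l : Fin n) : tensor ω i j l k = -tensor ω i j k l := by
  rw [tensor, tensor, twoForm_swap, mul_neg]

lemma tensor_self_left (ω : DForm n) (i k l : Fin n) : tensor ω i i k l = 0 := by
  rw [tensor, pairSign_self, zero_mul]

lemma two_mul_trace_two (ω : DForm n) : 2 * trace 2 ω = ∑ i, ∑ j, tensor ω i j i j := by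
  rw [trace, ← two_nsmul_sum_powersetCard_two (f := fun i j => tensor ω i j i j)
    (fun i => tensor_self_left ω i i i) fun i j hij => ?_,
    two_nsmul, two_mul]
  rw [tensor, twoForm, ← mul_assoc, pairSign_mul_self hij, one_mul]

lemma contr_singleton (ω : DForm n) (i j : Fin n) :
    contr ω {i} {j} = ∑ k, tensor ω k i k j := by
  refine sum_congr rfl fun k _ => ?_
  by_cases hi : k = i
  · simp [hi, tensor_self_left]
  by_cases hj : k = j
  · simp [hj, tensor, twoForm, pairSign_self]
  · rw [if_neg (by simp [hi, hj]), tensor, twoForm, pairSign_of_ne hi, pairSign_of_ne hj, mul_assoc]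

lemma wedgeTwo_eq_zero {u v : Fin n → Fin n → ℝ} (hu : ∀ i j, u j i = -u i j)
    (hv : ∀ i j, v j i = -v i j) {i j k l : Fin n} (h : ¬[i, j, k, l].Nodup) :
    wedgeTwo u v i j k l = 0 := by
  have u_self (i : Fin n) : u i i = 0 := self_eq_neg.1 (hu i i)
  have v_self (i : Fin n) : v i i = 0 := self_eq_neg.1 (hv i i)
  have repeated : i = j ∨ i = k ∨ i = l ∨ j = k ∨ j = l ∨ k = l := by grind
  rcases repeated with rfl | rfl | rfl | rfl | rfl | rfl <;>
    simp only [wedgeTwo, u_self, v_self]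
  · ring
  · rw [hu i j, hv i j]; ring
  · rw [hu i j, hv i j, hu i k, hv i k]; ring
  · ring
  · rw [hu j k, hv j k]; ring
  · ring

lemma wedgeTwo_tensor {i j k l : Fin n} (h : [i, j, k, l].Nodup) (ω θ : DForm n) :
    wedgeTwo (tensor ω i j) (tensor θ k l) i j k l =
      shuffleSign {i, j} {k, l} * ∑ B ∈ powersetCard 2 ({i, j} ∪ {k, l}),
        shuffleSign B (({i, j} ∪ {k, l}) \ B) *
          (ω {i, j} B * θ {k, l} (({i, j} ∪ {k, l}) \ B)) := by
  have hsign : shuffleSign {i, j} {k, l} * quadSign i j k l = pairSign i j * pairSign k l := by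
    rw [← mul_one (pairSign i j * _), ← shuffleSign_mul_self {i, j} {k, l},
      shuffleSign_pair_pair h, quadSign]
    ring
  rw [insert_union, singleton_union, sum_shuffleSign_mul h, ← mul_assoc, hsign]
  simp only [wedgeTwo, tensor]
  ring

lemma four_nsmul_trace_four_wedge {ω : DForm n} (hω : IsOfDeg ω 2 2) (θ : DForm n) :
    4 • trace 4 (wedge ω θ) =
      ∑ i, ∑ j, ∑ k, ∑ l, wedgeTwo (tensor ω i j) (tensor θ k l) i j k l := by
  have eq_zero {i j k l : Fin n} : ¬[i, j, k, l].Nodup →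
      wedgeTwo (tensor ω i j) (tensor θ k l) i j k l = 0 :=
    wedgeTwo_eq_zero (tensor_swap_right ω i j) (tensor_swap_right θ k l)
  simp only [trace_wedge hω θ 2, sum_filter]
  refine four_nsmul_sum_powersetCard_two (fun i k l => eq_zero (by simp))
    (fun i j k => eq_zero (by simp)) fun i j k l hij hkl => ?_
  have nodup_iff : [i, j, k, l].Nodup ↔ Disjoint ({i, j} : Finset (Fin n)) {k, l} := by
    simp only [List.nodup_cons, List.mem_cons, List.not_mem_nil, disjoint_insert_left,
      disjoint_singleton_left, mem_insert, mem_singleton]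
    tauto
  split_ifs with h
  · exact wedgeTwo_tensor (nodup_iff.2 h) ω θ
  · exact eq_zero (nodup_iff.not.2 h)

lemma four_nsmul_dinner_transp {ω : DForm n} (hω : IsOfDeg ω 2 2) (θ : DForm n) :
    4 • dinner ω (transp θ) = ∑ i, ∑ j, ∑ k, ∑ l, tensor ω i j k l * tensor θ k l i j := by
  rw [dinner_eq_sum_powersetCard hω]
  refine four_nsmul_sum_powersetCard_two (fun i k l => ?_) (fun i j k => ?_)
    fun i j k l hij hkl => ?_
  · rw [tensor_self_left, zero_mul]
  · rw [tensor_self_left, mul_zero]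
  · have hi := pairSign_mul_self hij
    have hk := pairSign_mul_self hkl
    simp only [tensor, twoForm, transp]
    linear_combination (ω {i, j} {k, l} * θ {k, l} {i, j}) *
      (hi * (pairSign k l * pairSign k l) + hk)

lemma dinner_contr_transp_contr {ω : DForm n} (hω : IsOfDeg ω 2 2) (θ : DForm n) :
    dinner (contr ω) (transp (contr θ)) =
      ∑ i, ∑ j, ∑ k, ∑ l, tensor ω i j i k * tensor θ k l j l := by
  simp only [dinner_eq_sum_powersetCard hω.contr, sum_powersetCard_one, transp, contr_singleton,
    sum_mul_sum]
  refine Eq.trans (sum_congr rfl fun j _ => ?_) sum_comm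
  refine Eq.trans (sum_congr rfl fun k _ => ?_) sum_comm
  refine sum_congr rfl fun i _ => sum_congr rfl fun l _ => ?_
  rw [tensor_swap_left θ k l, tensor_swap_right θ k l, neg_neg]

lemma trace_four_wedge {ω : DForm n} (hω : IsOfDeg ω 2 2) (θ : DForm n) :
    trace 4 (wedge ω θ) =
      trace 2 ω * trace 2 θ - dinner (contr ω) (transp (contr θ)) + dinner ω (transp θ) := by
  have ij_ij : ∑ i, ∑ j, ∑ k, ∑ l, tensor ω i j i j * tensor θ k l k l =
      2 * trace 2 ω * (2 * trace 2 θ) := by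
    simp only [two_mul_trace_two, ← mul_sum, ← sum_mul]
  have ij_ik := (dinner_contr_transp_contr hω θ).symm
  set ricci := dinner (contr ω) (transp (contr θ))
  have ij_il : ∑ i, ∑ j, ∑ k, ∑ l, tensor ω i j i l * tensor θ k l j k = -ricci := by
    simp only [← ij_ik, ← sum_neg_distrib]
    refine sum_congr rfl fun i _ => sum_congr rfl fun j _ => sum_comm.trans ?_
    refine sum_congr rfl fun k _ => sum_congr rfl fun l _ => ?_
    rw [tensor_swap_left θ k l, mul_neg]
  have ij_jk : ∑ i, ∑ j, ∑ k, ∑ l, tensor ω i j j k * tensor θ k l i l = -ricci := by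
    simp only [← ij_ik, ← sum_neg_distrib]
    refine sum_comm.trans (sum_congr rfl fun i _ => sum_congr rfl fun j _ => ?_)
    simp only [tensor_swap_left ω i j, neg_mul]
  have ij_jl : ∑ i, ∑ j, ∑ k, ∑ l, tensor ω i j j l * tensor θ k l i k = ricci := by
    rw [← neg_neg ricci, ← ij_il]
    simp only [← sum_neg_distrib]
    refine sum_comm.trans (sum_congr rfl fun i _ => sum_congr rfl fun j _ => ?_)
    simp only [tensor_swap_left ω i j, neg_mul]
  have shuffles : 4 • trace 4 (wedge ω θ) =
      2 * trace 2 ω * (2 * trace 2 θ) - ricci + -ricci + -ricci - ricci +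
        4 • dinner ω (transp θ) := by
    simp only [four_nsmul_trace_four_wedge hω, four_nsmul_dinner_transp hω, wedgeTwo,
      sum_add_distrib, sum_sub_distrib, ij_ij, ij_ik, ij_il, ij_jk, ij_jl]
  simp only [nsmul_eq_mul, Nat.cast_ofNat] at shuffles
  linarith

lemma dpow_one (ω : DForm n) : dpow ω 1 = ω := by
  have sdiff_ne_empty {I A : Finset (Fin n)} (hA : A ∈ I.powerset) (hne : A ≠ I) : I \ A ≠ ∅ :=
    fun h => hne ((mem_powerset.1 hA).antisymm (sdiff_eq_empty_iff_subset.1 h))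
  ext I J
  rw [dpow, wedge, sum_eq_single_of_mem I (mem_powerset_self I),
    sum_eq_single_of_mem J (mem_powerset_self J)]
  · simp [dpow, shuffleSign]
  · intro B hB hne
    simp [dpow, sdiff_ne_empty hB hne]
  · intro A hA hne
    simp [dpow, sdiff_ne_empty hA hne]

lemma dpow_two (ω : DForm n) : dpow ω 2 = wedge ω ω := by
  rw [dpow, dpow_one]

end DForm

open DForm in
theorem statement13_general (n : ℕ) (ω θ : DForm n) (hω : IsOfDeg ω 2 2) :
    toScalar (citer (wedge ω θ) 4) / ((Nat.factorial 4 : ℕ) : ℝ) =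
      dinner ω (transp θ) - dinner (contr ω) (transp (contr θ))
        + (1 / 4) * (toScalar (citer ω 2) * toScalar (citer θ 2)) := by
  rw [toScalar_citer, mul_div_cancel_left₀ _ (by positivity), trace_four_wedge hω,
    toScalar_citer, toScalar_citer, Nat.factorial_two]
  push_cast
  ring

open DForm in
/-- Avez's formula: `h₄(R) = |R|² - |cR|² + (1/4)|c²R|²` for `n ≥ 4`. -/
theorem statement13 (n : ℕ) (R : DForm n) (hsym : IsSym R) (hb : Bianchi2 R)
    (hgr : IsOfDeg R 2 2) (hn : 4 ≤ n) :
    toScalar (citer (dpow R 2) 4) / ((Nat.factorial 4 : ℕ) : ℝ) =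
      dinner R R - dinner (contr R) (contr R)
        + (1 / 4) * (toScalar (citer R 2)) ^ 2 := by
  rw [dpow_two, sq]
  simpa only [hsym.transp_eq, hsym.contr.transp_eq] using statement13_general n R R hgr
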